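/- Let a fusion datum on a countable type I admit a sequence (F_n) of nonempty finite subsets of I such that |∂ᴸ_γ F_n|_w / |F_n|_w → 0 as n → ∞ for every γ ∈ I. Let A be a unital C*-algebra and let σ_γ : A → A (γ ∈ I) be ℂ-linear maps with σ_γ(1) = 1 for every γ. Define ξ_n : I → A by ξ_n(α) := |F_n|_w^{-1/2}·(d α)·1_A for α ∈ F_n and ξ_n(α) := 0 otherwise. Then: (1) ⟨ξ_n|ξ_n⟩_A = 1_A for every n; (2) ξ_n(α)·a = a·ξ_n(α) for every α ∈ I, a ∈ A and n; and (3) ‖δ_γ *_σ ξ_n − ξ_n‖_{2,A} → 0 as n → ∞ for every γ ∈ I. Hence (ξ_n) is a Følner sequence for the action, so the action is FA-amenable. -/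

import Mathlib

open scoped BigOperators
open Filter
open scoped Classical

/-- A fusion datum on a type `I`: unit, structure constants, involution and a
dimension function satisfying the unit laws, Frobenius reciprocity and
multiplicativity of the dimension function. -/
structure FusionDatum (I : Type*) where
  e : I
  N : I → I → I → ℕ
  conj : I → I
  d : I → ℝ
  conj_e : conj e = e
  conj_conj : ∀ α, conj (conj α) = α
  N_conj : ∀ α β γ, N α β γ = N (conj β) (conj α) (conj γ)
  one_le_d : ∀ α, 1 ≤ d α
  d_conj : ∀ α, d (conj α) = d α
  N_unit_left : ∀ α γ, N e α γ = if γ = α then 1 else 0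
  N_unit_right : ∀ α γ, N α e γ = if γ = α then 1 else 0
  frobenius₁ : ∀ α β γ, N α β γ = N γ (conj β) α
  frobenius₂ : ∀ α β γ, N α β γ = N (conj α) γ β
  mul_support_finite : ∀ α β, (Function.support fun γ => (N α β γ : ℝ) * d γ).Finite
  d_mul : ∀ α β, (∑ᶠ γ, (N α β γ : ℝ) * d γ) = d α * d β

/-- Weighted cardinality `|S|_w = Σ_{α∈S} (d α)²` of a set. -/
noncomputable def FusionDatum.wcard {I : Type*} (F : FusionDatum I) (S : Set I) : ℝ :=
  ∑ᶠ α ∈ S, F.d α ^ 2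

/-- Right γ-boundary `∂_γ S`. -/
def FusionDatum.rBoundary {I : Type*} (F : FusionDatum I) (γ : I) (S : Set I) : Set I :=
  {α | (α ∈ S ∧ ∃ β ∉ S, 0 < F.N α γ β) ∨ (α ∉ S ∧ ∃ β ∈ S, 0 < F.N α γ β)}

/-- Left γ-boundary `∂ᴸ_γ S`. -/
def FusionDatum.lBoundary {I : Type*} (F : FusionDatum I) (γ : I) (S : Set I) : Set I :=
  {α | (α ∈ S ∧ ∃ β ∉ S, 0 < F.N γ α β) ∨ (α ∉ S ∧ ∃ β ∈ S, 0 < F.N γ α β)}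

/-- ℓ²-norm `(Σ_β |g β|²)^{1/2}` of a (finitely supported) function. -/
noncomputable def l2norm {I : Type*} (g : I → ℂ) : ℝ :=
  Real.sqrt (∑ᶠ β, ‖g β‖ ^ 2)

/-- The convolution operator `l_γ`. -/
noncomputable def FusionDatum.lconv {I : Type*} (F : FusionDatum I) (γ : I) (f : I → ℂ) :
    I → ℂ :=
  fun β => (1 / (F.d γ : ℂ)) * ∑ᶠ η, (F.N γ η β : ℂ) * f η

/-- A state on a unital C*-algebra: a unital positive linear functional. -/
structure CStarState (A : Type*) [NormedRing A] [StarRing A] [NormedAlgebra ℂ A] where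
  toFun : A →ₗ[ℂ] ℂ
  map_one : toFun 1 = 1
  pos : ∀ a : A, 0 ≤ (toFun (star a * a)).re ∧ (toFun (star a * a)).im = 0

/-- A CFA-type action of a fusion datum on a unital C*-algebra: `T α a` encodes `χ(α)·a`. -/
structure CFAAction {I : Type*} (F : FusionDatum I) (A : Type*)
    [NormedRing A] [StarRing A] [NormedAlgebra ℂ A] where
  T : I → A →ₗ[ℂ] A
  map_star : ∀ α a, T α (star a) = star (T α a)
  norm_le : ∀ α a, ‖T α a‖ ≤ F.d α * ‖a‖
  map_one : ∀ α, T α 1 = (F.d α : ℂ) • (1 : A)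
  comp_eq : ∀ α β a, T α (T β a) = ∑ᶠ γ, (F.N α β γ) • T γ a

/-- `⟨f|f⟩_A = Σ_α f α · (f α)*`. -/
noncomputable def innerA {I A : Type*} [NormedRing A] [StarRing A] (f : I → A) : A :=
  ∑ᶠ α, f α * star (f α)

/-- `‖f‖_{2,A} = ‖⟨f|f⟩_A‖^{1/2}`. -/
noncomputable def norm2A {I A : Type*} [NormedRing A] [StarRing A] (f : I → A) : ℝ :=
  Real.sqrt ‖innerA f‖

/-- Twisted convolution `(δ_γ *_σ f)(β) = (1/(d γ))·Σ_η N γ η β · σ_γ(f η)`. -/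
noncomputable def FusionDatum.tconv {I A : Type*} [NormedRing A] [NormedAlgebra ℂ A]
    (F : FusionDatum I) (σ : I → A → A) (γ : I) (f : I → A) : I → A :=
  fun β => (((F.d γ)⁻¹ : ℝ) : ℂ) • ∑ᶠ η, (F.N γ η β) • σ γ (f η)

/-- The ℂ-valued Følner vectors `ξ_F = |F|_w^{-1/2} Σ_{α∈F} d α · δ_α`. -/
noncomputable def xiC {I : Type*} (F : FusionDatum I) (S : Finset I) : I → ℂ :=
  fun α => if α ∈ S then (((Real.sqrt (F.wcard (S : Set I)))⁻¹ * F.d α : ℝ) : ℂ) else 0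

/-- The A-valued Følner vectors `ξ_F = |F|_w^{-1/2} Σ_{α∈F} d α · δ_α ⊗ 1_A`. -/
noncomputable def xiA {I : Type*} (F : FusionDatum I) (S : Finset I)
    (A : Type*) [NormedRing A] [NormedAlgebra ℂ A] : I → A :=
  fun α => if α ∈ S then (((Real.sqrt (F.wcard (S : Set I)))⁻¹ * F.d α : ℝ) : ℂ) • (1 : A)
    else 0

theorem FusionDatum.d_pos' {I : Type*} (F : FusionDatum I) (α : I) : 0 < F.d α :=
  lt_of_lt_of_le one_pos (F.one_le_d α)

theorem FusionDatum.wcard_finset {I : Type*} (F : FusionDatum I) (S : Finset I) :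
    F.wcard (S : Set I) = ∑ α ∈ S, F.d α ^ 2 := by
  unfold FusionDatum.wcard
  exact finsum_mem_coe_finset _ S

theorem FusionDatum.wcard_pos {I : Type*} (F : FusionDatum I) (S : Finset I)
    (hS : S.Nonempty) : 0 < F.wcard (S : Set I) := by
  rw [F.wcard_finset]
  exact Finset.sum_pos (fun α _ => pow_pos (F.d_pos' α) 2) hS

theorem FusionDatum.lBoundary_finite {I : Type*} (F : FusionDatum I) (γ : I) (S : Finset I) :
    (F.lBoundary γ (S : Set I)).Finite := by
  refine Set.Finite.subset (s := (S : Set I) ∪ ⋃ β ∈ S,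
    Function.support fun α => (F.N (F.conj γ) β α : ℝ) * F.d α) ?_ ?_
  · exact S.finite_toSet.union (S.finite_toSet.biUnion fun β _ => F.mul_support_finite _ _)
  · rintro α (⟨h, -⟩ | ⟨-, β, hβ, h⟩)
    · exact Or.inl h
    · right
      simp only [Set.mem_iUnion]
      refine ⟨β, hβ, ?_⟩
      rw [F.frobenius₂] at h
      have := F.d_pos' α
      simp only [Function.mem_support]
      positivity

/-- The scalar difference function. -/
noncomputable def FusionDatum.hdiff {I : Type*} (F : FusionDatum I) (γ : I) (S : Finset I)
    (β : I) : ℝ :=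
  (F.d γ)⁻¹ * ∑ η ∈ S, (F.N γ η β : ℝ) * F.d η - if β ∈ S then F.d β else 0

theorem FusionDatum.sum_le {I : Type*} (F : FusionDatum I) (γ : I) (S : Finset I) (β : I) :
    ∑ η ∈ S, (F.N γ η β : ℝ) * F.d η ≤ F.d γ * F.d β := by
  rw [← F.d_conj γ, ← F.d_mul (F.conj γ) β]
  have hfin := F.mul_support_finite (F.conj γ) β
  rw [finsum_eq_sum_of_support_subset (s := S ∪ hfin.toFinset) _ (by intro x hx; simp at hx ⊢; tauto)]
  have : ∀ η, F.N γ η β = F.N (F.conj γ) β η := fun η => F.frobenius₂ _ _ _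
  simp only [this]
  refine Finset.sum_le_sum_of_subset_of_nonneg Finset.subset_union_left ?_
  intro i _ _
  have := F.d_pos' i
  positivity

theorem FusionDatum.sum_eq {I : Type*} (F : FusionDatum I) (γ : I) (S : Finset I) (β : I)
    (h : ∀ η ∉ S, F.N (F.conj γ) β η = 0) :
    ∑ η ∈ S, (F.N γ η β : ℝ) * F.d η = F.d γ * F.d β := by
  rw [← F.d_conj γ, ← F.d_mul (F.conj γ) β]
  have : ∀ η, F.N γ η β = F.N (F.conj γ) β η := fun η => F.frobenius₂ _ _ _
  rw [finsum_eq_sum_of_support_subset (s := S)]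
  · simp only [this]
  · intro x hx
    by_contra hxS
    exact hx (by simp [h x hxS])

theorem FusionDatum.hdiff_sq_le {I : Type*} (F : FusionDatum I) (γ : I) (S : Finset I) (β : I) :
    F.hdiff γ S β ^ 2 ≤ F.d β ^ 2 := by
  have h1 := F.sum_le γ S β
  have h0 : 0 ≤ ∑ η ∈ S, (F.N γ η β : ℝ) * F.d η :=
    Finset.sum_nonneg fun i _ => mul_nonneg (Nat.cast_nonneg _) (F.d_pos' i).le
  have hg := F.d_pos' γ
  have hb := F.d_pos' β
  have h2 : (F.d γ)⁻¹ * ∑ η ∈ S, (F.N γ η β : ℝ) * F.d η ≤ F.d β := by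
    rw [inv_mul_le_iff₀ hg]; exact h1
  have h3 : 0 ≤ (F.d γ)⁻¹ * ∑ η ∈ S, (F.N γ η β : ℝ) * F.d η := by positivity
  unfold FusionDatum.hdiff
  apply sq_le_sq'
  · split_ifs <;> linarith
  · split_ifs <;> linarith

theorem FusionDatum.hdiff_eq_zero {I : Type*} (F : FusionDatum I) (γ : I) (S : Finset I) (β : I)
    (h : β ∉ F.lBoundary (F.conj γ) (S : Set I)) : F.hdiff γ S β = 0 := by
  have hg := F.d_pos' γ
  simp only [FusionDatum.lBoundary, Set.mem_setOf_eq, not_or, not_and, not_exists,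
    Finset.mem_coe] at h
  unfold FusionDatum.hdiff
  by_cases hb : β ∈ S
  · rw [F.sum_eq γ S β (fun η hη => by have := h.1 hb η hη; omega), if_pos hb]
    field_simp
    ring
  · rw [if_neg hb, Finset.sum_eq_zero]
    · simp
    · intro η hη
      have h2 := h.2 hb η hη
      have h3 : F.N γ η β = 0 := by rw [F.frobenius₂]; omega
      simp [h3]

theorem tconv_sub_eq {I : Type*} (F : FusionDatum I) (S : Finset I)
    {A : Type*} [NormedRing A] [NormedAlgebra ℂ A]
    (σ : I → A →ₗ[ℂ] A) (hσ : ∀ γ : I, σ γ 1 = 1) (γ β : I) :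
    (F.tconv (fun γ' => ⇑(σ γ')) γ (xiA F S A) - xiA F S A) β =
      (((Real.sqrt (F.wcard (S : Set I)))⁻¹ * F.hdiff γ S β : ℝ) : ℂ) • (1 : A) := by
  simp only [Pi.sub_apply, FusionDatum.tconv]
  rw [finsum_eq_sum_of_support_subset (s := S)]
  · have h1 : ∀ η ∈ S, F.N γ η β • σ γ (xiA F S A η) =
        (((Real.sqrt (F.wcard (S : Set I)))⁻¹ * ((F.N γ η β : ℝ) * F.d η) : ℝ) : ℂ) • (1 : A) := by
      intro η hη
      rw [xiA, if_pos hη, map_smul, hσ, ← Nat.cast_smul_eq_nsmul ℂ, smul_smul]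
      congr 1
      push_cast
      ring
    rw [Finset.sum_congr rfl h1, ← Finset.sum_smul, smul_smul]
    have h2 : xiA F S A β = (((Real.sqrt (F.wcard (S : Set I)))⁻¹ *
        (if β ∈ S then F.d β else 0) : ℝ) : ℂ) • (1 : A) := by
      unfold xiA
      split_ifs <;> simp
    rw [h2, ← sub_smul, ← Complex.ofReal_sum, ← Complex.ofReal_mul, ← Complex.ofReal_sub,
      ← Finset.mul_sum, FusionDatum.hdiff]
    congr 2
    ring
  · intro η hη
    by_contra hS
    apply hη
    have : xiA F S A η = 0 := if_neg hS
    simp [this]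

theorem smul_one_mul_star {A : Type*} [NormedRing A] [StarRing A] [NormedAlgebra ℂ A]
    [StarModule ℂ A] (r : ℝ) :
    ((r : ℂ) • (1 : A)) * star ((r : ℂ) • (1 : A)) = ((r ^ 2 : ℝ) : ℂ) • (1 : A) := by
  rw [star_smul, star_one, smul_mul_smul_comm, one_mul]
  congr 1
  simp [sq]

theorem norm_innerA_le {I : Type*} (F : FusionDatum I) (S : Finset I)
    {A : Type*} [NormedRing A] [StarRing A] [NormedAlgebra ℂ A] [StarModule ℂ A]
    (σ : I → A →ₗ[ℂ] A) (hσ : ∀ γ : I, σ γ 1 = 1) (γ : I) :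
    ‖innerA (F.tconv (fun γ' => ⇑(σ γ')) γ (xiA F S A) - xiA F S A)‖ ≤
      F.wcard (F.lBoundary (F.conj γ) (S : Set I)) / F.wcard (S : Set I) * ‖(1 : A)‖ := by
  have hfin := F.lBoundary_finite (F.conj γ) S
  have hw : 0 ≤ F.wcard (S : Set I) := by
    rw [F.wcard_finset]; positivity
  unfold innerA
  simp only [tconv_sub_eq F S σ hσ, smul_one_mul_star]
  rw [finsum_eq_sum_of_support_subset (s := hfin.toFinset)]
  · rw [← Finset.sum_smul, ← Complex.ofReal_sum]
    refine (norm_smul_le _ _).trans ?_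
    gcongr
    rw [Complex.norm_real, Real.norm_of_nonneg (by positivity)]
    have h3 : F.wcard (F.lBoundary (F.conj γ) (S : Set I)) =
        ∑ β ∈ hfin.toFinset, F.d β ^ 2 := by
      rw [← F.wcard_finset, Set.Finite.coe_toFinset]
    rw [h3, Finset.sum_div]
    refine Finset.sum_le_sum fun β _ => ?_
    rw [mul_pow, inv_pow, Real.sq_sqrt hw, div_eq_inv_mul]
    exact mul_le_mul_of_nonneg_left (F.hdiff_sq_le γ S β) (by positivity)
  · intro β hβ
    by_contra hb
    apply hβ
    have : F.hdiff γ S β = 0 := F.hdiff_eq_zero γ S β (by simpa using hb)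
    simp [this]

theorem innerA_xiA {I : Type*} (F : FusionDatum I) (S : Finset I) (hS : S.Nonempty)
    {A : Type*} [NormedRing A] [StarRing A] [NormedAlgebra ℂ A] [StarModule ℂ A] :
    innerA (xiA F S A) = 1 := by
  have hw := F.wcard_pos S hS
  unfold innerA
  rw [finsum_eq_sum_of_support_subset (s := S)]
  · have h1 : ∀ α ∈ S, xiA F S A α * star (xiA F S A α) =
        (((F.wcard (S : Set I))⁻¹ * F.d α ^ 2 : ℝ) : ℂ) • (1 : A) := by
      intro α hα
      rw [xiA, if_pos hα, smul_one_mul_star, mul_pow, inv_pow, Real.sq_sqrt hw.le]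
    rw [Finset.sum_congr rfl h1, ← Finset.sum_smul, ← Complex.ofReal_sum, ← Finset.mul_sum,
      ← F.wcard_finset, inv_mul_cancel₀ hw.ne']
    simp
  · intro α hα
    by_contra hb
    apply hα
    have : xiA F S A α = 0 := if_neg hb
    simp [this]

/-- given a left-Følner sequence `(F_n)` and unital ℂ-linear maps
`σ_γ : A → A`, the `A`-valued vectors `ξ_n` form a Følner sequence for the action:
`⟨ξ_n|ξ_n⟩_A = 1`, `ξ_n` is central-valued, and `‖δ_γ *_σ ξ_n − ξ_n‖_{2,A} → 0`. -/
theorem stmt7 {I : Type*} [Countable I] (F : FusionDatum I) (Fn : ℕ → Finset I)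
    (hne : ∀ n, (Fn n).Nonempty)
    (hFol : ∀ γ : I, Tendsto
      (fun n => F.wcard (F.lBoundary γ (Fn n : Set I)) / F.wcard (Fn n : Set I))
      atTop (nhds 0))
    {A : Type*} [NormedRing A] [StarRing A] [CStarRing A] [NormedAlgebra ℂ A]
    [StarModule ℂ A] [CompleteSpace A]
    (σ : I → A →ₗ[ℂ] A) (hσ : ∀ γ : I, σ γ 1 = 1) :
    (∀ n, innerA (xiA F (Fn n) A) = 1) ∧
    (∀ (n : ℕ) (α : I) (a : A), xiA F (Fn n) A α * a = a * xiA F (Fn n) A α) ∧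
    ∀ γ : I, Tendsto
      (fun n => norm2A (F.tconv (fun γ' => ⇑(σ γ')) γ (xiA F (Fn n) A) - xiA F (Fn n) A))
      atTop (nhds 0) := by
  refine ⟨fun n => innerA_xiA F (Fn n) (hne n), ?_, ?_⟩
  · intro n α a
    unfold xiA
    split_ifs <;> simp
  · intro γ
    have h := ((hFol (F.conj γ)).mul_const ‖(1 : A)‖).sqrt
    rw [zero_mul, Real.sqrt_zero] at h
    refine squeeze_zero (fun n => Real.sqrt_nonneg _) (fun n => ?_) h
    exact Real.sqrt_le_sqrt (norm_innerA_le F (Fn n) σ hσ γ)
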